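/- There exists no probability measure ρ on the space of subsets Γ of ℤ² (with the product σ-algebra on {0,1}^{ℤ²}) possessing all of the following properties: (1) ρ is invariant under Γ ↦ Γ + v for every v ∈ ℒ; (2) ρ satisfies the FKG inequality; (3) with ρ-probability one, Γ has exactly one infinite connected component and ℤ²∖Γ has exactly one infinite connected component. -/

import Mathlib

/-!
Call `Γ` and its complement the two colours; a path of one colour cannot cross a path of the other
(`no_crossing`, proved by counting signed crossings of vertical rays with a path). The proof
produces, in one strip `[0, W] × ℤ`, crossings of both colours whose endpoints are in opposite
orders on the two sides, with total failure probability less than one.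

Fix one colour. A large box meets the infinite cluster with probability close to one, and this
cluster meets every half-plane, so in a strip the box is joined to one of the two sides (`sides`);
it is joined to the left side if the right side is far away (`near_left`), and symmetrically. By
the square-root trick, `P(Aᶜ) P(Bᶜ) ≤ P((A ∪ B)ᶜ)` for increasing events, the last horizontal
position from which the left side is reached gives a box reaching the left side, while it or its
translate by `(k, 0)` reaches the right side (`horizontal`). The same trick gives median heights `a`
on the left and `b` on the right such that each side is reached both below and above the median
(`median`). By uniqueness of the infinite cluster, all nearby translates of the box are joined
inside the strip (`locU_small`). Hence, using a box for one side and its translate by `(0, k)` for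
the other, the strip is likely to be crossed from below `a` to above `b + k`, and likely to be
crossed from above `a + k` to below `b` (`Perc.crossings`).

For the other colour one gets heights `a'`, `b'` in the same strip, and a vertical translation by a
multiple of `k` ensures `a ≤ a' < a + k`. If `b' ≤ b`, the first crossing of the first colour (below
`a` to above `b + k`) is incompatible with the second crossing of the other colour (above `a' + k`
to below `b'`); if `b' > b`, the second crossing of the first colour is incompatible with the first
crossing of the other one (`perc_contradiction`).
-/

open MeasureTheory

noncomputable section

/-- Configurations: subsets `Γ ⊆ ℤ²` encoded as boolean functions (product σ-algebra). -/
abbrev Conf := (ℤ × ℤ) → Bool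

/-- Nearest-neighbor adjacency on `ℤ²`: `x ~ y` iff `‖x - y‖₁ = 1`. -/
def adjZ2 (x y : ℤ × ℤ) : Prop := (x.1 - y.1).natAbs + (x.2 - y.2).natAbs = 1

/-- The subset of `ℤ²` described by the configuration `ω`. -/
def siteSet (ω : Conf) : Set (ℤ × ℤ) := {x | ω x = true}

/-- The complement `ℤ² ∖ Γ`. -/
def coSet (ω : Conf) : Set (ℤ × ℤ) := {x | ω x = false}

/-- Reachability within `S` by nearest-neighbor paths inside `S`. -/
def reachIn (S : Set (ℤ × ℤ)) (x y : ℤ × ℤ) : Prop :=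
  Relation.ReflTransGen (fun a b => adjZ2 a b ∧ a ∈ S ∧ b ∈ S) x y

/-- `C` is a connected component of `S` (a maximal connected subset, i.e. a reachability
class of a point of `S`). -/
def IsComponent (S C : Set (ℤ × ℤ)) : Prop := ∃ x ∈ S, C = {y | reachIn S x y}

/-- Increasing events of configurations. -/
def IncreasingEvent (A : Set Conf) : Prop :=
  ∀ ⦃ω ω' : Conf⦄, ω ∈ A → (∀ x, ω x ≤ ω' x) → ω' ∈ A

/-- `ρ` satisfies the FKG inequality. -/
def SatisfiesFKG (ρ : Measure Conf) : Prop :=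
  ∀ A B : Set Conf, MeasurableSet A → MeasurableSet B →
    IncreasingEvent A → IncreasingEvent B → ρ A * ρ B ≤ ρ (A ∩ B)

/-- Translation of configurations: `translateConf v ω` describes `Γ_ω + v`. -/
def translateConf (v : ℤ × ℤ) (ω : Conf) : Conf := fun x => ω (x - v)

/-! ### Paths and planarity -/

/-- `u` lies in `S` and is joined to `v` inside `S`; unlike `reachIn`, this fails for
`u = v ∉ S`. -/
def Conn (S : Set (ℤ × ℤ)) (u v : ℤ × ℤ) : Prop := u ∈ S ∧ reachIn S u v

lemma adj_symm {u v : ℤ × ℤ} (h : adjZ2 u v) : adjZ2 v u := by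
  unfold adjZ2 at *; omega

lemma reach_symm {S : Set (ℤ × ℤ)} {u v : ℤ × ℤ} (h : reachIn S u v) : reachIn S v u := by
  unfold reachIn at *
  induction h with
  | refl => exact .refl
  | tail _ h ih => exact ih.head ⟨adj_symm h.1, h.2.2, h.2.1⟩

lemma reach_trans {S : Set (ℤ × ℤ)} {u v w : ℤ × ℤ} (h : reachIn S u v) (h' : reachIn S v w) :
    reachIn S u w :=
  Relation.ReflTransGen.trans h h'

lemma reach_mono {S T : Set (ℤ × ℤ)} (hST : S ⊆ T) {u v : ℤ × ℤ} (h : reachIn S u v) :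
    reachIn T u v :=
  Relation.ReflTransGen.mono (fun _ _ h => ⟨h.1, hST h.2.1, hST h.2.2⟩) _ _ h

lemma Conn.mono {S T : Set (ℤ × ℤ)} (hST : S ⊆ T) {u v : ℤ × ℤ} (h : Conn S u v) : Conn T u v :=
  ⟨hST h.1, reach_mono hST h.2⟩

lemma Conn.right_mem {S : Set (ℤ × ℤ)} {u v : ℤ × ℤ} (h : Conn S u v) : v ∈ S := by
  obtain ⟨h1, h2⟩ := h
  unfold reachIn at h2
  induction h2 with
  | refl => exact h1
  | tail _ h _ => exact h.2.2

/-- The vertical strip `A ≤ x₁ ≤ B`. -/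
def strip (A B : ℤ) : Set (ℤ × ℤ) := {x | A ≤ x.1 ∧ x.1 ≤ B}

open Classical in
/-- The signed number of crossings, by the step `e → e'`, of the downward ray issued from
`(x + 1/2, y)`, where `v = (x, y)`; a step at height exactly `y` does not count. -/
def stepFlux (e e' v : ℤ × ℤ) : ℤ :=
  (if e.1 = v.1 ∧ e'.1 = v.1 + 1 ∧ e.2 < v.2 then 1 else 0) -
    (if e.1 = v.1 + 1 ∧ e'.1 = v.1 ∧ e.2 < v.2 then 1 else 0)

open Classical in
/-- Summing `stepFlux` over a path from `s` to `e` gives a function `F` that is locally constant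
off the path: vertically it does not change, and horizontally it changes only through the
endpoints of the path, by conservation of flux on the column below `(x, y)`. -/
lemma exists_flux {S : Set (ℤ × ℤ)} {W : ℤ} (hS : S ⊆ strip 0 W) {s e : ℤ × ℤ}
    (h : reachIn S s e) :
    ∃ F : ℤ × ℤ → ℤ, (∀ x y, (x, y) ∉ S → F (x, y + 1) = F (x, y)) ∧
      (∀ x y, (x, y) ∉ S → F (x - 1, y) - F (x, y) =
        (if e.1 = x ∧ e.2 < y then 1 else 0) - (if s.1 = x ∧ s.2 < y then 1 else 0)) ∧
      (∀ y, F (-1, y) = 0) ∧ (∀ y, F (W, y) = 0) := by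
  unfold reachIn at h
  induction h with
  | refl => exact ⟨fun _ => 0, by simp, by simp, by simp, by simp⟩
  | @tail e e' _ hs ih =>
    obtain ⟨F, h1, h2, h3, h4⟩ := ih
    obtain ⟨hadj, he, he'⟩ := hs
    have b := hS he
    have b' := hS he'
    obtain ⟨e1, e2⟩ := e
    obtain ⟨f1, f2⟩ := e'
    simp only [strip, Set.mem_ofPred_eq, adjZ2] at b b' hadj
    have key : ∀ x y, (x, y) ∉ S → ¬ (x = e1 ∧ y = e2) ∧ ¬ (x = f1 ∧ y = f2) := by
      intro x y hxy
      constructor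
      · rintro ⟨rfl, rfl⟩; exact hxy he
      · rintro ⟨rfl, rfl⟩; exact hxy he'
    refine ⟨fun v => F v + stepFlux (e1, e2) (f1, f2) v, ?_, ?_, ?_, ?_⟩
    · intro x y hxy
      have := key x y hxy
      simp only [h1 x y hxy, stepFlux]
      split_ifs <;> omega
    · intro x y hxy
      have := key x y hxy
      have h2 := h2 x y hxy
      simp only [stepFlux] at h2 ⊢
      have : stepFlux (e1, e2) (f1, f2) (x - 1, y) - stepFlux (e1, e2) (f1, f2) (x, y) =
          (if f1 = x ∧ f2 < y then 1 else 0) - (if e1 = x ∧ e2 < y then 1 else 0) := by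
        clear h1 h2 h3 h4
        simp only [stepFlux]
        split_ifs <;> omega
      simp only [stepFlux] at this
      linarith
    · intro y
      simp only [h3, stepFlux]
      split_ifs <;> omega
    · intro y
      simp only [h4, stepFlux]
      split_ifs <;> omega

/-- Two disjoint paths joining the two sides of a strip arrive in the order in which they
started. -/
lemma no_crossing {S T : Set (ℤ × ℤ)} {W : ℤ} (hW : 0 < W) (hS : S ⊆ strip 0 W)
    (hT : T ⊆ strip 0 W) (hd : Disjoint S T) {y y' z z' : ℤ}
    (hA : Conn S (0, y) (W, y')) (hB : Conn T (0, z) (W, z')) (h1 : y < z) (h2 : z' < y') :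
    False := by
  classical
  obtain ⟨F, f1, f2, f3, f4⟩ := exists_flux hS hA.2
  have hT' : ∀ v ∈ T, v ∉ S := fun v hv hv' => Set.disjoint_left.1 hd hv' hv
  -- the crossing number of the path in `S`, prolonged horizontally beyond the right side
  set J : ℤ × ℤ → ℤ := fun v => F v + if v.1 = W ∧ y' < v.2 then 1 else 0 with hJ
  have hinv : ∀ v, reachIn T (0, z) v → J v = J (0, z) := by
    intro v hv
    unfold reachIn at hv
    induction hv with
    | refl => rfl
    | @tail v v' _ hs ih =>
      rw [← ih]
      obtain ⟨hadj, hv, hv'⟩ := hs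
      have b := hT hv
      have b' := hT hv'
      have n := hT' _ hv
      have n' := hT' _ hv'
      have hAr := hA.right_mem
      obtain ⟨e1, e2⟩ := v
      obtain ⟨g1, g2⟩ := v'
      have nW : ¬ (e1 = W ∧ e2 = y') := by rintro ⟨rfl, rfl⟩; exact n hAr
      have nW' : ¬ (g1 = W ∧ g2 = y') := by rintro ⟨rfl, rfl⟩; exact n' hAr
      simp only [strip, Set.mem_ofPred_eq, adjZ2] at b b' hadj
      simp only [hJ]
      have hc : (g1 = e1 ∧ g2 = e2 + 1) ∨ (e1 = g1 ∧ e2 = g2 + 1) ∨ (e1 = g1 - 1 ∧ g2 = e2) ∨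
          (g1 = e1 - 1 ∧ g2 = e2) := by omega
      rcases hc with ⟨rfl, rfl⟩ | ⟨rfl, rfl⟩ | ⟨rfl, rfl⟩ | ⟨rfl, rfl⟩
      · rw [f1 _ _ n]; split_ifs <;> omega
      · rw [f1 _ _ n']; split_ifs <;> omega
      · have := f2 _ _ n'
        split_ifs at this ⊢ <;> omega
      · have := f2 _ _ n
        split_ifs at this ⊢ <;> omega
  have e := hinv _ hB.2
  have n := f2 0 z (hT' _ hB.1)
  have n0 := f3 z
  have n1 := f4 z'
  rw [zero_sub] at n
  simp only [hJ, n1] at e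
  rw [n0] at n
  split_ifs at e n <;> omega

lemma reach_shift {S T : Set (ℤ × ℤ)} (w : ℤ × ℤ) (hST : ∀ x ∈ S, x + w ∈ T) {u v : ℤ × ℤ}
    (h : reachIn S u v) : reachIn T (u + w) (v + w) := by
  unfold reachIn at *
  induction h with
  | refl => exact .refl
  | tail _ h ih =>
    refine ih.tail ⟨?_, hST _ h.2.1, hST _ h.2.2⟩
    have := h.1
    simp only [adjZ2, Prod.fst_add, Prod.snd_add, add_sub_add_right_eq_sub] at *
    exact this

lemma Conn.shift {S T : Set (ℤ × ℤ)} (w : ℤ × ℤ) (hST : ∀ x ∈ S, x + w ∈ T) {u v : ℤ × ℤ}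
    (h : Conn S u v) : Conn T (u + w) (v + w) :=
  ⟨hST _ h.1, reach_shift w hST h.2⟩

lemma reach_bounded {S : Set (ℤ × ℤ)} {u v : ℤ × ℤ} (h : reachIn S u v) :
    ∃ N : ℤ, ∀ n ≥ N, reachIn (S ∩ {x | |x.1| < n}) u v := by
  unfold reachIn at h
  induction h with
  | refl => exact ⟨0, fun _ _ => .refl⟩
  | @tail a b _ h ih =>
    obtain ⟨N, hN⟩ := ih
    refine ⟨max N (|a.1| + |b.1| + 1), fun n hn => ?_⟩
    have h1 : N ≤ n := le_trans (le_max_left _ _) hn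
    have h2 := le_trans (le_max_right _ _) hn
    have := abs_nonneg a.1
    have := abs_nonneg b.1
    refine Relation.ReflTransGen.tail (hN n h1) ⟨h.1, ⟨h.2.1, ?_⟩, ⟨h.2.2, ?_⟩⟩
    · show |a.1| < n
      omega
    · show |b.1| < n
      omega

/-- A path leaving `T` is truncated at its first exit. -/
lemma Conn.exit {S : Set (ℤ × ℤ)} (T : Set (ℤ × ℤ)) {u v : ℤ × ℤ} (h : Conn S u v)
    (hu : u ∈ T) :
    Conn (S ∩ T) u v ∨ ∃ w w', Conn (S ∩ T) u w ∧ w' ∉ T ∧ adjZ2 w w' := by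
  obtain ⟨hS, h⟩ := h
  unfold reachIn at h
  induction h with
  | refl => exact .inl ⟨⟨hS, hu⟩, .refl⟩
  | @tail a b _ h ih =>
    rcases ih with ih | ih
    · by_cases hb : b ∈ T
      · refine .inl ⟨ih.1, ?_⟩
        exact Relation.ReflTransGen.tail ih.2 ⟨h.1, ih.right_mem, ⟨h.2.2, hb⟩⟩
      · exact .inr ⟨a, b, ih, hb, h.1⟩
    · exact .inr ih

/-- `x` lies in an infinite connected component of `S`. -/
def Inf (S : Set (ℤ × ℤ)) (x : ℤ × ℤ) : Prop := x ∈ S ∧ {y | reachIn S x y}.Infinite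

/-- `S` has exactly one infinite connected component. -/
def UniqueInf (S : Set (ℤ × ℤ)) : Prop :=
  (∃ x, Inf S x) ∧ ∀ x y, Inf S x → Inf S y → reachIn S x y

lemma uniqueInf_of_existsUnique {S : Set (ℤ × ℤ)}
    (h : ∃! C : Set (ℤ × ℤ), IsComponent S C ∧ C.Infinite) : UniqueInf S := by
  obtain ⟨C, ⟨⟨x, hx, rfl⟩, hC⟩, hu⟩ := h
  refine ⟨⟨x, hx, hC⟩, ?_⟩
  have key : ∀ a, Inf S a → reachIn S x a := by
    intro a ha
    have := hu {z | reachIn S a z} ⟨⟨a, ha.1, rfl⟩, ha.2⟩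
    have h2 : a ∈ {z | reachIn S a z} := Relation.ReflTransGen.refl
    rw [this] at h2
    exact h2
  exact fun a b ha hb => reach_trans (reach_symm (key a ha)) (key b hb)

lemma Inf.shift {S T : Set (ℤ × ℤ)} (w : ℤ × ℤ) (hST : ∀ x ∈ S, x + w ∈ T) {u : ℤ × ℤ}
    (h : Inf S u) : Inf T (u + w) := by
  refine ⟨hST _ h.1, ?_⟩
  refine (h.2.image (f := fun x => x + w) (add_left_injective w).injOn).mono ?_
  rintro _ ⟨y, hy, rfl⟩
  exact reach_shift w hST hy

/-- A path from a point of a strip to the half-plane beyond its left side reaches one of the two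
sides of the strip before leaving it. -/
lemma Conn.exit_strip {S : Set (ℤ × ℤ)} {A B : ℤ} {u v : ℤ × ℤ} (h : Conn S u v)
    (hu : u ∈ strip A B) (hv : v.1 ≤ A) :
    ∃ w, Conn (S ∩ strip A B) u w ∧ (w.1 = A ∨ w.1 = B) := by
  rcases h.exit (strip A B) hu with h | ⟨w, w', h, h1, h2⟩
  · refine ⟨v, h, .inl ?_⟩
    have := h.right_mem.2
    simp only [strip, Set.mem_ofPred_eq] at this
    omega
  · refine ⟨w, h, ?_⟩
    have := h.right_mem.2
    simp only [strip, Set.mem_ofPred_eq, adjZ2] at this h1 h2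
    omega

lemma Conn.exit_left {S : Set (ℤ × ℤ)} {A : ℤ} {u v : ℤ × ℤ} (h : Conn S u v)
    (hu : A ≤ u.1) (hv : v.1 ≤ A) :
    ∃ y, ∃ N : ℤ, ∀ n ≥ N, Conn (S ∩ strip A n) u (A, y) := by
  have : ∃ w, Conn (S ∩ {x | A ≤ x.1}) u w ∧ w.1 = A := by
    rcases h.exit {x | A ≤ x.1} hu with h | ⟨w, w', h, h1, h2⟩
    · have := h.right_mem.2
      simp only [Set.mem_ofPred_eq] at this
      exact ⟨v, h, by omega⟩
    · refine ⟨w, h, ?_⟩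
      have := h.right_mem.2
      simp only [Set.mem_ofPred_eq, adjZ2] at this h1 h2
      omega
  obtain ⟨⟨w1, w2⟩, hw, rfl⟩ := this
  obtain ⟨N, hN⟩ := reach_bounded hw.2
  refine ⟨w2, max N u.1, fun n hn => ⟨⟨hw.1.1, hu, le_trans (le_max_right _ _) hn⟩, ?_⟩⟩
  refine reach_mono ?_ (hN n (le_trans (le_max_left _ _) hn))
  rintro x ⟨⟨h1, h2⟩, h3⟩
  exact ⟨h1, h2, (abs_lt.1 h3).2.le⟩

lemma Conn.exit_right {S : Set (ℤ × ℤ)} {B : ℤ} {u v : ℤ × ℤ} (h : Conn S u v)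
    (hu : u.1 ≤ B) (hv : B ≤ v.1) :
    ∃ y, ∃ N : ℤ, ∀ n ≥ N, Conn (S ∩ strip (-n) B) u (B, y) := by
  have : ∃ w, Conn (S ∩ {x | x.1 ≤ B}) u w ∧ w.1 = B := by
    rcases h.exit {x | x.1 ≤ B} hu with h | ⟨w, w', h, h1, h2⟩
    · have := h.right_mem.2
      simp only [Set.mem_ofPred_eq] at this
      exact ⟨v, h, by omega⟩
    · refine ⟨w, h, ?_⟩
      have := h.right_mem.2
      simp only [Set.mem_ofPred_eq, adjZ2] at this h1 h2
      omega
  obtain ⟨⟨w1, w2⟩, hw, rfl⟩ := this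
  obtain ⟨N, hN⟩ := reach_bounded hw.2
  refine ⟨w2, max N (-u.1), fun n hn => ⟨⟨hw.1.1, ?_, hu⟩, ?_⟩⟩
  · have := le_trans (le_max_right _ _) hn
    show -n ≤ u.1
    omega
  refine reach_mono ?_ (hN n (le_trans (le_max_left _ _) hn))
  rintro x ⟨⟨h1, h2⟩, h3⟩
  exact ⟨h1, (abs_lt.1 h3).1.le, h2⟩

lemma finite_cluster_bounded {S : Set (ℤ × ℤ)} {u : ℤ × ℤ} (h : {y | reachIn S u y}.Finite) :
    ∃ N : ℤ, ∀ n ≥ N, ∀ y, reachIn S u y → |y.1| < n := by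
  obtain ⟨M, hM⟩ := (h.image (fun y => |y.1|)).bddAbove
  exact ⟨M + 1, fun n hn y hy => by have := hM ⟨y, hy, rfl⟩; simp only at this; omega⟩

/-! ### Measurability -/

/-- Reachability in exactly `n` steps; its recursive form makes the measurability of
reachability an induction. -/
def reachN (S : Set (ℤ × ℤ)) : ℕ → ℤ × ℤ → ℤ × ℤ → Prop
  | 0, x, y => x = y
  | n + 1, x, y => ∃ z, reachN S n x z ∧ adjZ2 z y ∧ z ∈ S ∧ y ∈ S

lemma reachIn_iff {S : Set (ℤ × ℤ)} {u v : ℤ × ℤ} : reachIn S u v ↔ ∃ n, reachN S n u v := by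
  constructor
  · intro h
    unfold reachIn at h
    induction h with
    | refl => exact ⟨0, rfl⟩
    | tail _ h ih =>
      obtain ⟨n, hn⟩ := ih
      exact ⟨n + 1, _, hn, h⟩
  · rintro ⟨n, hn⟩
    induction n generalizing v with
    | zero => cases hn; exact .refl
    | succ n ih =>
      obtain ⟨z, h1, h2⟩ := hn
      exact Relation.ReflTransGen.tail (ih h1) h2

lemma measurable_mem_site (T : Set (ℤ × ℤ)) (x : ℤ × ℤ) :
    Measurable fun ω : Conf => x ∈ siteSet ω ∩ T := by
  refine Measurable.and ?_ measurable_const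
  refine measurableSet_setOfPred.1 ?_
  exact measurableSet_eq_fun (measurable_pi_apply x) measurable_const

lemma measurable_reach (T : Set (ℤ × ℤ)) (u v : ℤ × ℤ) :
    Measurable fun ω : Conf => reachIn (siteSet ω ∩ T) u v := by
  simp only [reachIn_iff]
  refine Measurable.exists fun n => ?_
  induction n generalizing v with
  | zero => exact measurable_const
  | succ n ih =>
    exact Measurable.exists fun z => (ih z).and
      (measurable_const.and ((measurable_mem_site T z).and (measurable_mem_site T v)))

lemma measurable_conn (T : Set (ℤ × ℤ)) (u v : ℤ × ℤ) :
    Measurable fun ω : Conf => Conn (siteSet ω ∩ T) u v :=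
  (measurable_mem_site T u).and (measurable_reach T u v)

lemma measurable_inf (u : ℤ × ℤ) : Measurable fun ω : Conf => Inf (siteSet ω) u := by
  have : ∀ ω : Conf, Inf (siteSet ω) u ↔ u ∈ siteSet ω ∩ Set.univ ∧
      ¬ ∃ F : Finset (ℤ × ℤ), ∀ y, reachIn (siteSet ω ∩ Set.univ) u y → y ∈ F := by
    intro ω
    rw [Set.inter_univ, Inf, Set.Infinite]
    refine and_congr_right fun _ => not_congr ⟨fun h => ⟨h.toFinset, by simp⟩, ?_⟩
    rintro ⟨F, hF⟩
    exact F.finite_toSet.subset hF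
  simp only [this]
  exact (measurable_mem_site _ u).and (Measurable.exists fun F => Measurable.forall fun y =>
    (measurable_reach _ u y).imp measurable_const).not

lemma measurable_uniqueInf : Measurable fun ω : Conf => UniqueInf (siteSet ω) := by
  refine (Measurable.exists measurable_inf).and (Measurable.forall fun x => Measurable.forall
    fun y => (measurable_inf x).imp ((measurable_inf y).imp ?_))
  simpa using measurable_reach Set.univ x y

/-! ### Events -/

/-- The box of radius `K` around `z`. -/
def Box (z : ℤ × ℤ) (K : ℤ) : Set (ℤ × ℤ) := {u | |u.1 - z.1| ≤ K ∧ |u.2 - z.2| ≤ K}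

/-- Some point of the box around `z` is joined, inside the strip `[A, B] × ℤ`, to a point of
the column `s` with height in `J`. -/
def Hit (A B : ℤ) (z : ℤ × ℤ) (K s : ℤ) (J : Set ℤ) : Set Conf :=
  {ω | ∃ u y, u ∈ Box z K ∧ y ∈ J ∧ Conn (siteSet ω ∩ strip A B) u (s, y)}

/-- The strip `[A, B] × ℤ` is crossed by a path starting on its left side at a height in `J` and
ending on its right side at a height in `J'`. -/
def Cross (A B : ℤ) (J J' : Set ℤ) : Set Conf :=
  {ω | ∃ y w, y ∈ J ∧ w ∈ J' ∧ Conn (siteSet ω ∩ strip A B) (A, y) (B, w)}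

/-- The box around `z` meets an infinite cluster. -/
def Touch (z : ℤ × ℤ) (K : ℤ) : Set Conf := {ω | ∃ u, u ∈ Box z K ∧ Inf (siteSet ω) u}

/-- Local uniqueness: any two points of the box of radius `M` whose clusters reach horizontal
distance `n` are joined within horizontal distance less than `n`. -/
def LocU (M n : ℤ) : Set Conf :=
  {ω | ∀ u v, u ∈ Box 0 M → v ∈ Box 0 M →
    (∃ u', n ≤ |u'.1| ∧ Conn (siteSet ω) u u') → (∃ v', n ≤ |v'.1| ∧ Conn (siteSet ω) v v') →
    reachIn (siteSet ω ∩ {x | |x.1| < n}) u v}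

lemma measurableSet_hit (A B : ℤ) (z : ℤ × ℤ) (K s : ℤ) (J : Set ℤ) :
    MeasurableSet (Hit A B z K s J) :=
  measurableSet_setOfPred.2 <| Measurable.exists fun _ => Measurable.exists fun _ =>
    measurable_const.and (measurable_const.and (measurable_conn _ _ _))

lemma measurableSet_touch (z : ℤ × ℤ) (K : ℤ) : MeasurableSet (Touch z K) :=
  measurableSet_setOfPred.2 <| Measurable.exists fun _ => measurable_const.and (measurable_inf _)

lemma measurableSet_locU (M n : ℤ) : MeasurableSet (LocU M n) := by
  have key : ∀ u v, Measurable fun ω : Conf => Conn (siteSet ω) u v := by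
    intro u v
    simpa using measurable_conn Set.univ u v
  exact measurableSet_setOfPred.2 <| Measurable.forall fun u => Measurable.forall fun v =>
    measurable_const.imp <| measurable_const.imp <|
      (Measurable.exists fun _ => measurable_const.and (key _ _)).imp <|
      (Measurable.exists fun _ => measurable_const.and (key _ _)).imp (measurable_reach _ _ _)

lemma increasing_hit (A B : ℤ) (z : ℤ × ℤ) (K s : ℤ) (J : Set ℤ) :
    IncreasingEvent (Hit A B z K s J) := by
  rintro ω ω' ⟨u, y, hu, hy, h⟩ hle
  refine ⟨u, y, hu, hy, h.mono (Set.inter_subset_inter_left _ fun x hx => ?_)⟩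
  have := hle x
  rw [show ω x = true from hx] at this
  exact Bool.eq_true_of_true_le this

/-! ### Translation invariance and the square-root trick -/

open Filter Topology Set
open scoped ENNReal

/-- The properties of the law of `Γ` used for each of the two colours: invariance under `kℤ²`, the
FKG inequality for complements of increasing events, and uniqueness of the infinite cluster. -/
structure Perc (k : ℤ) (ρ : Measure Conf) : Prop where
  pos : 1 ≤ k
  prob : IsProbabilityMeasure ρ
  inv : ∀ (i j : ℤ) (A : Set Conf), ρ (translateConf (k * i, k * j) ⁻¹' A) ≤ ρ A
  fkg : ∀ A B : Set Conf, MeasurableSet A → MeasurableSet B →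
    IncreasingEvent A → IncreasingEvent B → ρ Aᶜ * ρ Bᶜ ≤ ρ (A ∪ B)ᶜ
  uniq : ∀ᵐ ω ∂ρ, UniqueInf (siteSet ω)

lemma mem_of_translate {v x : ℤ × ℤ} {ω : Conf} (h : x ∈ siteSet (translateConf (-v) ω)) :
    x + v ∈ siteSet ω := by
  simpa [siteSet, translateConf] using h

lemma mem_of_translate_strip {A B A' B' : ℤ} {v x : ℤ × ℤ} {ω : Conf} (hA : A' = A + v.1)
    (hB : B' = B + v.1) (h : x ∈ siteSet (translateConf (-v) ω) ∩ strip A B) :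
    x + v ∈ siteSet ω ∩ strip A' B' := by
  refine ⟨mem_of_translate h.1, ?_⟩
  have := h.2
  simp only [strip, Set.mem_ofPred_eq, Prod.fst_add] at this ⊢
  omega

lemma hit_shift {A B K s A' B' s' : ℤ} {z z' v : ℤ × ℤ} {J J' : Set ℤ} {ω : Conf}
    (hA : A' = A + v.1) (hB : B' = B + v.1) (hs : s' = s + v.1) (hz : z' = z + v)
    (hJ : ∀ y ∈ J, y + v.2 ∈ J') (h : translateConf (-v) ω ∈ Hit A B z K s J) :
    ω ∈ Hit A' B' z' K s' J' := by
  obtain ⟨u, y, hu, hy, h⟩ := h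
  refine ⟨u + v, y + v.2, ?_, hJ y hy, ?_⟩
  · subst hz
    simpa [Box] using hu
  · subst hs
    exact h.shift v fun x hx => mem_of_translate_strip hA hB hx

lemma cross_shift {A B A' B' : ℤ} {v : ℤ × ℤ} {J J' I I' : Set ℤ} {ω : Conf}
    (hA : A' = A + v.1) (hB : B' = B + v.1)
    (hJ : ∀ y ∈ J, y + v.2 ∈ I) (hJ' : ∀ y ∈ J', y + v.2 ∈ I')
    (h : translateConf (-v) ω ∈ Cross A B J J') : ω ∈ Cross A' B' I I' := by
  obtain ⟨y, y', hy, hy', h⟩ := h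
  refine ⟨y + v.2, y' + v.2, hJ y hy, hJ' y' hy', ?_⟩
  have := h.shift v fun x hx => mem_of_translate_strip hA hB hx
  subst hA hB
  exact this

lemma touch_shift {K : ℤ} {z v : ℤ × ℤ} {ω : Conf}
    (h : translateConf (-v) ω ∈ Touch z K) : ω ∈ Touch (z + v) K := by
  obtain ⟨u, hu, h⟩ := h
  refine ⟨u + v, ?_, h.shift v fun x hx => mem_of_translate hx⟩
  simpa [Box] using hu

lemma eventually_small {ρ : Measure Conf} [IsFiniteMeasure ρ] {B : ℤ → Set Conf}
    (hB : ∀ n, MeasurableSet (B n)) (hae : ∀ᵐ ω ∂ρ, ∀ᶠ n in atTop, ω ∈ B n) {δ : ℝ≥0∞}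
    (hδ : 0 < δ) : ∀ᶠ n in atTop, ρ (B n)ᶜ ≤ δ := by
  have := tendsto_measure_of_ae_tendsto_indicator_of_isFiniteMeasure (μ := ρ) (A := ∅)
    (As := fun n => (B n)ᶜ) atTop MeasurableSet.empty (fun n => (hB n).compl) (by
      filter_upwards [hae] with ω hω
      filter_upwards [hω] with n hn
      simpa using hn)
  rw [measure_empty] at this
  exact this.eventually_le_const hδ

namespace Perc

variable {k : ℤ} {ρ : Measure Conf}

lemma le_of_shift (h : Perc k ρ) (i j : ℤ) {A A' : Set Conf}
    (hA : ∀ ω, translateConf (-(k * i, k * j)) ω ∈ A → ω ∈ A') : ρ A'ᶜ ≤ ρ Aᶜ := by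
  refine le_trans (measure_mono ?_) (h.inv (-i) (-j) Aᶜ)
  intro ω hω hmem
  refine hω (hA ω ?_)
  simpa using hmem

/-- The square-root trick. -/
lemma sqrt_trick (h : Perc k ρ) {A B : Set Conf} (hA : MeasurableSet A) (hB : MeasurableSet B)
    (hA' : IncreasingEvent A) (hB' : IncreasingEvent B) {t : ℝ≥0∞} (ht : ρ (A ∪ B)ᶜ ≤ t * t) :
    ρ Aᶜ ≤ t ∨ ρ Bᶜ ≤ t := by
  by_contra! hc
  exact absurd ((h.fkg A B hA hB hA' hB').trans ht) (not_le.2 (ENNReal.mul_lt_mul hc.1 hc.2))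

lemma touch_exists (h : Perc k ρ) {δ : ℝ≥0∞} (hδ : 0 < δ) :
    ∃ K : ℤ, 0 ≤ K ∧ ρ (Touch 0 K)ᶜ ≤ δ := by
  have := h.prob
  have := eventually_small (ρ := ρ) (B := Touch 0) (fun n => measurableSet_touch 0 n) (by
    filter_upwards [h.uniq] with ω hω
    obtain ⟨x, hx⟩ := hω.1
    filter_upwards [eventually_ge_atTop (max |x.1| |x.2|)] with n hn
    exact ⟨x, by simpa [Box] using hn, hx⟩) hδ
  obtain ⟨K, h1, h2⟩ := (this.and (eventually_ge_atTop 0)).exists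
  exact ⟨K, h2, h1⟩

lemma touch_le (h : Perc k ρ) (i j K : ℤ) : ρ (Touch (k * i, k * j) K)ᶜ ≤ ρ (Touch 0 K)ᶜ :=
  h.le_of_shift i j fun ω hω => by simpa using touch_shift hω

/-- The infinite cluster meets all left and all right half-planes. -/
lemma ae_halfplanes (h : Perc k ρ) : ∀ᵐ ω ∂ρ, ∀ m : ℤ,
    (∃ x, Inf (siteSet ω) x ∧ x.1 ≤ m) ∧ (∃ x, Inf (siteSet ω) x ∧ m ≤ x.1) := by
  have hk := h.pos
  rw [ae_all_iff]
  intro m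
  refine Filter.Eventually.and ?_ ?_
  · refine le_antisymm (le_of_forall_gt_imp_ge_of_dense fun δ hδ => ?_) zero_le
    obtain ⟨K, hK, hT⟩ := h.touch_exists hδ
    refine le_trans (measure_mono ?_) ((h.touch_le (-(|m| + K)) 0 K).trans hT)
    rintro ω hω ⟨u, hu, hi⟩
    refine hω ⟨u, hi, ?_⟩
    have h1 := (abs_le.1 hu.1).2
    have := neg_abs_le m
    simp only at h1
    nlinarith [abs_nonneg m]
  · refine le_antisymm (le_of_forall_gt_imp_ge_of_dense fun δ hδ => ?_) zero_le
    obtain ⟨K, hK, hT⟩ := h.touch_exists hδ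
    refine le_trans (measure_mono ?_) ((h.touch_le (|m| + K) 0 K).trans hT)
    rintro ω hω ⟨u, hu, hi⟩
    refine hω ⟨u, hi, ?_⟩
    have h1 := (abs_le.1 hu.1).1
    have := le_abs_self m
    simp only at h1
    nlinarith [abs_nonneg m]

lemma sides (h : Perc k ρ) {A B K : ℤ} (hA : K ≤ -A) (hB : K ≤ B) :
    ρ (Hit A B 0 K A univ ∪ Hit A B 0 K B univ)ᶜ ≤ ρ (Touch 0 K)ᶜ := by
  refine measure_mono_ae ?_
  filter_upwards [h.uniq, h.ae_halfplanes] with ω hu hh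
  rintro hω ⟨u, hb, hi⟩
  obtain ⟨x, hx, hxA⟩ := (hh A).1
  have h1 := abs_le.1 hb.1
  simp only [Prod.fst_zero, sub_zero] at h1
  obtain ⟨⟨w1, w2⟩, hw, hs⟩ := Conn.exit_strip (S := siteSet ω) (A := A) (B := B)
    ⟨hi.1, hu.2 u x hi hx⟩ ⟨by omega, by omega⟩ hxA
  rcases hs with rfl | rfl
  · exact hω (.inl ⟨u, w2, hb, trivial, hw⟩)
  · exact hω (.inr ⟨u, w2, hb, trivial, hw⟩)

/-- In a strip whose left side is at fixed distance and whose right side is far away, the box is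
joined to the left side. -/
lemma near_left (h : Perc k ρ) {N K : ℤ} (hN : K ≤ N) {δ : ℝ≥0∞} (hδ : 0 < δ) :
    ∀ᶠ n in atTop, ρ (Hit (-N) n 0 K (-N) univ)ᶜ ≤ δ + ρ (Touch 0 K)ᶜ := by
  have := h.prob
  have := eventually_small (ρ := ρ) (B := fun n => Hit (-N) n 0 K (-N) univ ∪ (Touch 0 K)ᶜ)
    (fun n => (measurableSet_hit _ _ _ _ _ _).union (measurableSet_touch _ _).compl) (by
    filter_upwards [h.uniq, h.ae_halfplanes] with ω hu hh
    by_cases hT : ω ∈ Touch 0 K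
    · obtain ⟨u, hb, hi⟩ := hT
      obtain ⟨x, hx, hxA⟩ := (hh (-N)).1
      have h1 := abs_le.1 hb.1
      simp only [Prod.fst_zero, sub_zero] at h1
      obtain ⟨y, n0, hy⟩ := Conn.exit_left (S := siteSet ω) (A := -N)
        ⟨hi.1, hu.2 u x hi hx⟩ (by omega) hxA
      filter_upwards [eventually_ge_atTop n0] with n hn
      exact .inl ⟨u, y, hb, trivial, hy n hn⟩
    · exact .of_forall fun n => .inr hT) hδ
  filter_upwards [this] with n hn
  refine le_trans (le_trans (measure_mono ?_) (measure_union_le _ _)) (add_le_add_left hn _)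
  intro ω hω
  by_cases hT : ω ∈ Touch 0 K
  · exact .inl fun h => h.elim hω fun h => h hT
  · exact .inr hT

lemma near_right (h : Perc k ρ) {N K : ℤ} (hN : K ≤ N) {δ : ℝ≥0∞} (hδ : 0 < δ) :
    ∀ᶠ n in atTop, ρ (Hit (-n) N 0 K N univ)ᶜ ≤ δ + ρ (Touch 0 K)ᶜ := by
  have := h.prob
  have := eventually_small (ρ := ρ) (B := fun n => Hit (-n) N 0 K N univ ∪ (Touch 0 K)ᶜ)
    (fun n => (measurableSet_hit _ _ _ _ _ _).union (measurableSet_touch _ _).compl) (by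
    filter_upwards [h.uniq, h.ae_halfplanes] with ω hu hh
    by_cases hT : ω ∈ Touch 0 K
    · obtain ⟨u, hb, hi⟩ := hT
      obtain ⟨x, hx, hxA⟩ := (hh N).2
      have h1 := abs_le.1 hb.1
      simp only [Prod.fst_zero, sub_zero] at h1
      obtain ⟨y, n0, hy⟩ := Conn.exit_right (S := siteSet ω) (B := N)
        ⟨hi.1, hu.2 u x hi hx⟩ (by omega) hxA
      filter_upwards [eventually_ge_atTop n0] with n hn
      exact .inl ⟨u, y, hb, trivial, hy n hn⟩
    · exact .of_forall fun n => .inr hT) hδ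
  filter_upwards [this] with n hn
  refine le_trans (le_trans (measure_mono ?_) (measure_union_le _ _)) (add_le_add_left hn _)
  intro ω hω
  by_cases hT : ω ∈ Touch 0 K
  · exact .inl fun h => h.elim hω fun h => h hT
  · exact .inr hT

/-- Finite clusters have bounded extent, and any two points of the infinite cluster are joined
by a path of bounded extent. -/
lemma locU_small (h : Perc k ρ) (M : ℤ) {δ : ℝ≥0∞} (hδ : 0 < δ) :
    ∀ᶠ n in atTop, ρ (LocU M n)ᶜ ≤ δ := by
  have := h.prob
  refine eventually_small (measurableSet_locU M) ?_ hδ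
  filter_upwards [h.uniq] with ω hu
  have hfin : (Box 0 M).Finite := by
    refine (((Set.finite_Icc (-M) M).prod (Set.finite_Icc (-M) M))).subset ?_
    rintro ⟨x, y⟩ ⟨h1, h2⟩
    simp only [Prod.fst_zero, Prod.snd_zero, sub_zero] at h1 h2
    exact ⟨abs_le.1 h1, abs_le.1 h2⟩
  have key : ∀ p ∈ Box 0 M ×ˢ Box 0 M, ∀ᶠ n : ℤ in atTop,
      (∃ u', n ≤ |u'.1| ∧ Conn (siteSet ω) p.1 u') →
      (∃ v', n ≤ |v'.1| ∧ Conn (siteSet ω) p.2 v') →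
      reachIn (siteSet ω ∩ {x | |x.1| < n}) p.1 p.2 := by
    rintro ⟨u, v⟩ -
    have aux : ∀ u, ¬ Inf (siteSet ω) u →
        ∀ᶠ n : ℤ in atTop, ¬ ∃ u', n ≤ |u'.1| ∧ Conn (siteSet ω) u u' := by
      intro u hi
      by_cases hu : u ∈ siteSet ω
      · have : {y | reachIn (siteSet ω) u y}.Finite := by
          by_contra hc
          exact hi ⟨hu, hc⟩
        obtain ⟨N, hN⟩ := finite_cluster_bounded this
        filter_upwards [eventually_ge_atTop N] with n hn
        rintro ⟨u', h1, h2⟩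
        exact absurd (hN n hn u' h2.2) (not_lt.2 h1)
      · exact .of_forall fun n ⟨_, _, h⟩ => hu h.1
    by_cases h1 : Inf (siteSet ω) u
    · by_cases h2 : Inf (siteSet ω) v
      · obtain ⟨N, hN⟩ := reach_bounded (hu.2 u v h1 h2)
        filter_upwards [eventually_ge_atTop N] with n hn
        exact fun _ _ => hN n hn
      · filter_upwards [aux v h2] with n hn
        exact fun _ h => absurd h hn
    · filter_upwards [aux u h1] with n hn
      exact fun h => absurd h hn
  have := (Set.Finite.eventually_all (hfin.prod hfin)).2 key
  filter_upwards [this] with n hn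
  exact fun u v hu hv => hn (u, v) ⟨hu, hv⟩

/-! ### Choice of the thresholds -/

/-- For every wide strip there is a horizontal position, far from both sides, from which the box
reaches the left side while the box or its translate by `(k, 0)` reaches the right side. -/
lemma horizontal (h : Perc k ρ) {K n : ℤ} (hK : K ≤ k * n) {t δ : ℝ≥0∞}
    (hδ : 0 < δ) (hT : ρ (Touch 0 K)ᶜ ≤ δ) (h1 : δ ≤ t * t) (h2 : δ + δ ≤ t) :
    ∃ w0 : ℤ, ∀ w ≥ w0, ∃ i c : ℤ, n ≤ i ∧ n ≤ w - i ∧ (c = 0 ∨ c = 1) ∧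
      ρ (Hit (-(k * i)) (k * (w - i)) 0 K (-(k * i)) univ)ᶜ ≤ t ∧
      ρ (Hit (-(k * i)) (k * (w - i)) (k * c, 0) K (k * (w - i)) univ)ᶜ ≤ t := by
  have hk := h.pos
  obtain ⟨a, ha⟩ := eventually_atTop.1 (h.near_left hK hδ)
  obtain ⟨b, hb⟩ := eventually_atTop.1 (h.near_right hK hδ)
  have hT2 : δ + ρ (Touch 0 K)ᶜ ≤ t := (add_le_add_right hT δ).trans h2
  refine ⟨2 * |n| + |a| + |b|, fun w hw => ?_⟩
  have a0 := abs_nonneg a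
  have b0 := abs_nonneg b
  have a1 := le_abs_self a
  have b1 := le_abs_self b
  have n0 := le_abs_self n
  have n1 := abs_nonneg n
  have hL : ρ (Hit (-(k * n)) (k * (w - n)) 0 K (-(k * n)) univ)ᶜ ≤ t :=
    (ha _ (by nlinarith)).trans hT2
  have hR : ρ (Hit (-(k * (w - n))) (k * n) 0 K (k * n) univ)ᶜ ≤ t :=
    (hb _ (by nlinarith)).trans hT2
  have hor : ∀ i, n ≤ i → n ≤ w - i →
      ρ (Hit (-(k * i)) (k * (w - i)) 0 K (-(k * i)) univ)ᶜ ≤ t ∨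
      ρ (Hit (-(k * i)) (k * (w - i)) 0 K (k * (w - i)) univ)ᶜ ≤ t := by
    intro i hi hi'
    refine h.sqrt_trick (measurableSet_hit _ _ _ _ _ _) (measurableSet_hit _ _ _ _ _ _)
      (increasing_hit _ _ _ _ _ _) (increasing_hit _ _ _ _ _ _)
      ((h.sides ?_ ?_).trans (hT.trans h1)) <;> nlinarith
  by_cases hall : ∀ i, n ≤ i → n ≤ w - i →
      ρ (Hit (-(k * i)) (k * (w - i)) 0 K (-(k * i)) univ)ᶜ ≤ t
  · refine ⟨w - n, 0, by omega, by omega, .inl rfl, hall _ (by omega) (by omega), ?_⟩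
    simpa [Prod.mk_zero_zero] using hR
  · -- the last position from which the left side is reached
    have : ∃ i, n ≤ i ∧ n ≤ w - (i + 1) ∧
        ρ (Hit (-(k * i)) (k * (w - i)) 0 K (-(k * i)) univ)ᶜ ≤ t ∧
        ¬ ρ (Hit (-(k * (i + 1))) (k * (w - (i + 1))) 0 K (-(k * (i + 1))) univ)ᶜ ≤ t := by
      by_contra! hc
      refine hall fun i hi => ?_
      induction i, hi using Int.leInduction with
      | base => exact fun _ => hL
      | succ i hi ih => exact fun hi' => hc i hi hi' (ih (by omega))
    obtain ⟨i, hi, hi', hP, hQ⟩ := this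
    refine ⟨i, 1, hi, by omega, .inr rfl, hP, ?_⟩
    refine le_trans (h.le_of_shift 1 0 fun ω hω => ?_)
      ((hor (i + 1) (by omega) hi').resolve_left hQ)
    exact hit_shift (by simp; ring) (by simp; ring) (by simp; ring) (by simp) (by simp) hω

/-- A median height at which the box reaches the column `s`, both above and below. -/
lemma median (h : Perc k ρ) (A B : ℤ) (z : ℤ × ℤ) (K s : ℤ) {e t : ℝ≥0∞} (ht : 0 < t)
    (h1 : t ≤ e * e) (h2 : t + t ≤ e) (hH : ρ (Hit A B z K s univ)ᶜ ≤ t) :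
    ∃ a : ℤ, ρ (Hit A B z K s (Iic a))ᶜ ≤ e ∧ ρ (Hit A B z K s (Ici a))ᶜ ≤ e := by
  have := h.prob
  have aux : ∀ J : ℤ → Set ℤ, (∀ y, ∀ᶠ n in atTop, y ∈ J n) →
      ∀ᶠ n in atTop, ρ (Hit A B z K s (J n))ᶜ ≤ e := by
    intro J hJ
    have := eventually_small (ρ := ρ)
      (B := fun n => Hit A B z K s (J n) ∪ (Hit A B z K s univ)ᶜ)
      (fun n => (measurableSet_hit _ _ _ _ _ _).union (measurableSet_hit _ _ _ _ _ _).compl) (by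
      refine .of_forall fun ω => ?_
      by_cases hT : ω ∈ Hit A B z K s univ
      · obtain ⟨u, y, hu, -, hc⟩ := hT
        filter_upwards [hJ y] with n hn
        exact .inl ⟨u, y, hu, hn, hc⟩
      · exact .of_forall fun n => .inr hT) ht
    filter_upwards [this] with n hn
    refine le_trans (le_trans (measure_mono ?_) (measure_union_le _ _))
      ((add_le_add hn hH).trans h2)
    intro ω hω
    by_cases hT : ω ∈ Hit A B z K s univ
    · exact .inl fun h => h.elim hω fun h => h hT
    · exact .inr hT
  obtain ⟨a, ha⟩ := eventually_atTop.1 (aux Iic fun y => eventually_ge_atTop y)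
  obtain ⟨b, hb⟩ := eventually_atTop.1 (aux (fun n => Ici (-n)) fun y => by
    filter_upwards [eventually_ge_atTop (-y)] with n hn
    show -n ≤ y
    omega)
  have hb0 : ρ (Hit A B z K s (Ici (-b)))ᶜ ≤ e := hb b le_rfl
  by_cases hall : ∀ i, -b ≤ i → ρ (Hit A B z K s (Ici i))ᶜ ≤ e
  · exact ⟨max a (-b), ha _ (le_max_left _ _), hall _ (le_max_right _ _)⟩
  · have : ∃ i, ρ (Hit A B z K s (Ici i))ᶜ ≤ e ∧ ¬ ρ (Hit A B z K s (Ici (i + 1)))ᶜ ≤ e := by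
      by_contra! hc
      refine hall fun i hi => ?_
      induction i, hi using Int.leInduction with
      | base => exact hb0
      | succ i hi ih => exact hc i ih
    obtain ⟨i, hP, hQ⟩ := this
    refine ⟨i, ?_, hP⟩
    refine (h.sqrt_trick (measurableSet_hit _ _ _ _ _ _) (measurableSet_hit _ _ _ _ _ _)
      (increasing_hit _ _ _ _ _ _) (increasing_hit _ _ _ _ _ _) ?_).resolve_right hQ
    refine le_trans (measure_mono (compl_subset_compl.2 ?_)) (hH.trans h1)
    rintro ω ⟨u, y, hu, -, hc⟩
    rcases le_or_gt y i with hy | hy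
    · exact .inl ⟨u, y, hu, hy, hc⟩
    · exact .inr ⟨u, y, hu, hy, hc⟩

end Perc

/-- Local uniqueness glues a connection to the left side with one to the right side. -/
lemma cross_of_hits {A B K M n : ℤ} {z z' : ℤ × ℤ} {J J' : Set ℤ} {ω : Conf} (hA : n ≤ -A)
    (hB : n ≤ B) (hn : 0 ≤ n) (hz : Box z K ⊆ Box 0 M) (hz' : Box z' K ⊆ Box 0 M)
    (hU : ω ∈ LocU M n) (h : ω ∈ Hit A B z K A J) (h' : ω ∈ Hit A B z' K B J') :
    ω ∈ Cross A B J J' := by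
  obtain ⟨u, y, hu, hy, hc⟩ := h
  obtain ⟨v, y', hv, hy', hc'⟩ := h'
  refine ⟨y, y', hy, hy', hc.right_mem, ?_⟩
  have huv := hU u v (hz hu) (hz' hv)
    ⟨_, by rw [abs_of_nonpos] <;> omega, hc.mono inter_subset_left⟩
    ⟨_, by rw [abs_of_nonneg] <;> omega, hc'.mono inter_subset_left⟩
  refine reach_trans (reach_symm hc.2) (reach_trans (reach_mono ?_ huv) hc'.2)
  rintro x ⟨hx, hx'⟩
  have := abs_lt.1 (show |x.1| < n from hx')
  exact ⟨hx, by omega, by omega⟩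

lemma exists_small {e : ℝ≥0∞} (he : 0 < e) : ∃ t : ℝ≥0∞, 0 < t ∧ t ≤ e * e ∧ t + t ≤ e := by
  refine ⟨min (e * e) (e / 2), ?_, min_le_left _ _, ?_⟩
  · exact lt_min (ENNReal.mul_pos he.ne' he.ne') (ENNReal.half_pos he.ne')
  · exact (add_le_add (min_le_right _ _) (min_le_right _ _)).trans (ENNReal.add_halves e).le

lemma box_subset {k K : ℤ} (hk : 1 ≤ k) {c d : ℤ} (hc : c = 0 ∨ c = 1) (hd : d = 0 ∨ d = 1) :
    Box (k * c, k * d) K ⊆ Box 0 (K + k) := by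
  rintro ⟨x, y⟩ ⟨h1, h2⟩
  simp only [Box, Set.mem_ofPred_eq, Prod.fst_zero, Prod.snd_zero, sub_zero, abs_le] at *
  rcases hc with rfl | rfl <;> rcases hd with rfl | rfl <;> simp at h1 h2 <;> omega

/-- Every wide strip has heights `a`, `b` for which the two oppositely tilted crossings, from below
`a` to above `b + k` and from above `a + k` to below `b`, are both likely. The margin `k` is the
price for aligning the heights of the two colours only by multiples of `k`. -/
theorem Perc.crossings {k : ℤ} {ρ : Measure Conf} (h : Perc k ρ) {e : ℝ≥0∞} (he : 0 < e) :
    ∃ w0 : ℤ, ∀ w ≥ w0, ∃ a b : ℤ,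
      ρ (Cross 0 (k * w) (Iic a) (Ici (b + k)))ᶜ ≤ e + e + e ∧
      ρ (Cross 0 (k * w) (Ici (a + k)) (Iic b))ᶜ ≤ e + e + e := by
  have hk := h.pos
  obtain ⟨t, ht, ht1, ht2⟩ := exists_small he
  obtain ⟨δ, hδ, hδ1, hδ2⟩ := exists_small ht
  obtain ⟨K, hK, hT⟩ := h.touch_exists hδ
  obtain ⟨n0, hn0⟩ := eventually_atTop.1 (h.locU_small (K + k) he)
  set n := |n0| + K with hn
  have p0 := abs_nonneg n0
  have p1 := le_abs_self n0
  have hU := hn0 (k * n) (by nlinarith)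
  obtain ⟨w0, hw0⟩ := h.horizontal (n := n) (by nlinarith) hδ hT hδ1 hδ2
  refine ⟨w0, fun w hw => ?_⟩
  obtain ⟨i, c, hi, hi', hc, hL, hR⟩ := hw0 w hw
  obtain ⟨a, ha1, ha2⟩ := h.median _ _ _ _ _ ht ht1 ht2 hL
  obtain ⟨b, hb1, hb2⟩ := h.median _ _ _ _ _ ht ht1 ht2 hR
  have g1 : k * n ≤ -(-(k * i)) := by nlinarith
  have g2 : k * n ≤ k * (w - i) := by nlinarith
  have g3 : 0 ≤ k * n := by nlinarith
  have B00 : Box 0 K ⊆ Box 0 (K + k) := by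
    simpa [Prod.mk_zero_zero] using box_subset (K := K) hk (c := 0) (d := 0) (.inl rfl) (.inl rfl)
  have B01 : Box (0, k) K ⊆ Box 0 (K + k) := by
    simpa using box_subset (K := K) hk (c := 0) (d := 1) (.inl rfl) (.inr rfl)
  have Bc0 : Box (k * c, 0) K ⊆ Box 0 (K + k) := by
    simpa using box_subset (K := K) hk (c := c) (d := 0) hc (.inl rfl)
  have Bc1 : Box (k * c, k) K ⊆ Box 0 (K + k) := by
    simpa using box_subset (K := K) hk (c := c) (d := 1) hc (.inr rfl)
  -- the translates by `(0, k)` of the two boxes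
  have ha3 : ρ (Hit (-(k * i)) (k * (w - i)) (0, k) K (-(k * i)) (Ici (a + k)))ᶜ ≤ e :=
    le_trans (h.le_of_shift 0 1 fun ω hω => hit_shift (by simp) (by simp) (by simp) (by simp)
      (by simp) hω) ha2
  have hb3 : ρ (Hit (-(k * i)) (k * (w - i)) (k * c, k) K (k * (w - i)) (Ici (b + k)))ᶜ ≤ e :=
    le_trans (h.le_of_shift 0 1 fun ω hω => hit_shift (by simp) (by simp) (by simp) (by simp)
      (by simp) hω) hb2
  have glue : ∀ {z z' : ℤ × ℤ} {J J' : Set ℤ}, Box z K ⊆ Box 0 (K + k) →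
      Box z' K ⊆ Box 0 (K + k) → ρ (Hit (-(k * i)) (k * (w - i)) z K (-(k * i)) J)ᶜ ≤ e →
      ρ (Hit (-(k * i)) (k * (w - i)) z' K (k * (w - i)) J')ᶜ ≤ e →
      ρ (Cross 0 (k * w) J J')ᶜ ≤ e + e + e := by
    intro z z' J J' hz hz' hl hr
    have : ρ (Cross (-(k * i)) (k * (w - i)) J J')ᶜ ≤ e + e + e := by
      refine le_trans (le_trans (measure_mono ?_) (measure_union_le _ _))
        (add_le_add ((measure_union_le _ _).trans (add_le_add hl hr)) hU)
      intro ω hω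
      by_contra hc
      simp only [mem_union, mem_compl_iff, not_or, not_not] at hc
      exact hω (cross_of_hits g1 g2 g3 hz hz' hc.2 hc.1.1 hc.1.2)
    refine le_trans (h.le_of_shift i 0 fun ω hω => ?_) this
    exact cross_shift (by simp) (by simp; ring) (by simp) (by simp) hω
  exact ⟨a, b, glue B00 Bc1 ha1 hb3, glue B01 Bc0 ha3 hb1⟩

/-! ### The two colours together -/

/-- The colour swap, sending `Γ` to its complement. -/
def colorFlip (ω : Conf) : Conf := fun x => !(ω x)

lemma measurable_colorFlip : Measurable colorFlip :=
  measurable_pi_lambda _ fun x => (measurable_of_finite Bool.not).comp (measurable_pi_apply x)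

lemma measurable_translateConf (v : ℤ × ℤ) : Measurable (translateConf v) :=
  measurable_pi_lambda _ fun x => measurable_pi_apply (x - v)

lemma siteSet_colorFlip (ω : Conf) : siteSet (colorFlip ω) = coSet ω := by
  ext x
  simp [siteSet, coSet, colorFlip]

/-- Crossings of the two colours with reversed orders of their endpoints exclude each other. -/
lemma cross_incompatible {W : ℤ} (hW : 0 < W) {ω : Conf} {J J' I I' : Set ℤ}
    (h : ω ∈ Cross 0 W J J') (h' : colorFlip ω ∈ Cross 0 W I I')
    (ho : (∀ y ∈ J, ∀ z ∈ I, y < z) ∧ (∀ y ∈ J', ∀ z ∈ I', z < y) ∨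
      (∀ y ∈ J, ∀ z ∈ I, z < y) ∧ (∀ y ∈ J', ∀ z ∈ I', y < z)) : False := by
  obtain ⟨y, y', hy, hy', hc⟩ := h
  obtain ⟨z, z', hz, hz', hc'⟩ := h'
  have hd : Disjoint (siteSet ω ∩ strip 0 W) (siteSet (colorFlip ω) ∩ strip 0 W) := by
    rw [siteSet_colorFlip, Set.disjoint_left]
    rintro x ⟨h1, -⟩ ⟨h2, -⟩
    simp only [siteSet, coSet, Set.mem_ofPred_eq] at h1 h2
    simp [h1] at h2
  rcases ho with ⟨h1, h2⟩ | ⟨h1, h2⟩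
  · exact no_crossing hW inter_subset_right inter_subset_right hd hc hc' (h1 y hy z hz)
      (h2 y' hy' z' hz')
  · exact no_crossing hW inter_subset_right inter_subset_right hd.symm hc' hc (h1 y hy z hz)
      (h2 y' hy' z' hz')

lemma perc_contradiction {k : ℤ} {ρ : Measure Conf} (h : Perc k ρ) (h' : Perc k (ρ.map colorFlip)) :
    False := by
  have hk := h.pos
  have := h.prob
  have he : (0 : ℝ≥0∞) < 7⁻¹ := by simp
  obtain ⟨w0, hw0⟩ := h.crossings he
  obtain ⟨w1, hw1⟩ := h'.crossings he
  set w := max (max w0 w1) 1 with hw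
  obtain ⟨a, b, h1, h2⟩ := hw0 w (le_trans (le_max_left _ _) (le_max_left _ _))
  obtain ⟨a', b', h3, h4⟩ := hw1 w (le_trans (le_max_right _ _) (le_max_left _ _))
  have hwp : 1 ≤ w := le_max_right _ _
  have hW : 0 < k * w := by positivity
  -- two events of probability at least `4/7` occur together
  have both : ∀ {J J' I I' : Set ℤ},
      ρ (Cross 0 (k * w) J J')ᶜ ≤ 7⁻¹ + 7⁻¹ + 7⁻¹ →
      ρ.map colorFlip (Cross 0 (k * w) I I')ᶜ ≤ 7⁻¹ + 7⁻¹ + 7⁻¹ →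
      ((∀ y ∈ J, ∀ z ∈ I, y < z) ∧ (∀ y ∈ J', ∀ z ∈ I', z < y) ∨
      (∀ y ∈ J, ∀ z ∈ I, z < y) ∧ (∀ y ∈ J', ∀ z ∈ I', y < z)) → False := by
    intro J J' I I' hJ hI ho
    have hI' := (Measure.le_map_apply measurable_colorFlip.aemeasurable _).trans hI
    have : (univ : Set Conf) ⊆
        (Cross 0 (k * w) J J')ᶜ ∪ colorFlip ⁻¹' (Cross 0 (k * w) I I')ᶜ := by
      intro ω _
      by_contra hc
      simp only [mem_union, mem_compl_iff, not_or, not_not, mem_preimage] at hc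
      exact cross_incompatible hW hc.1 hc.2 ho
    have h1 := (measure_mono this).trans ((measure_union_le _ _).trans (add_le_add hJ hI'))
    rw [measure_univ] at h1
    have h2 : (7⁻¹ + 7⁻¹ + 7⁻¹ + (7⁻¹ + 7⁻¹ + 7⁻¹) : ℝ≥0∞) < 1 := by
      have : (7⁻¹ : ℝ≥0∞) = ((7⁻¹ : NNReal) : ℝ≥0∞) := by
        rw [ENNReal.coe_inv (by norm_num)]; norm_num
      rw [this]
      norm_cast
      norm_num [← NNReal.coe_lt_coe]
    exact absurd h1 (not_le.2 h2)
  have shift : ∀ {I I' N N' : Set ℤ} (j : ℤ), (∀ y ∈ I, y + k * j ∈ N) →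
      (∀ y ∈ I', y + k * j ∈ N') → ρ.map colorFlip (Cross 0 (k * w) I I')ᶜ ≤ 7⁻¹ + 7⁻¹ + 7⁻¹ →
      ρ.map colorFlip (Cross 0 (k * w) N N')ᶜ ≤ 7⁻¹ + 7⁻¹ + 7⁻¹ := by
    intro I I' N N' j hI hI' hh
    refine le_trans (h'.le_of_shift 0 j fun ω hω => ?_) hh
    exact cross_shift (by simp) (by simp) hI hI' hω
  -- the vertical translation `j` brings `a'` into `[a, a + k)`
  set j := -((a' - a) / k) with hj
  have e1 := Int.mul_ediv_add_emod (a' - a) k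
  have e2 := Int.emod_nonneg (a' - a) (by omega : k ≠ 0)
  have e3 := Int.emod_lt_of_pos (a' - a) (by omega : 0 < k)
  have e4 : k * j = -(k * ((a' - a) / k)) := by rw [hj]; ring
  have h3' := shift (N := Iic (a' + k * j)) (N' := Ici (b' + k * j + k)) j
    (by simp) (by intro y hy; simp only [mem_Ici] at hy ⊢; omega) h3
  have h4' := shift (N := Ici (a' + k * j + k)) (N' := Iic (b' + k * j)) j
    (by intro y hy; simp only [mem_Ici] at hy ⊢; omega) (by simp) h4
  rcases le_or_gt (b' + k * j) b with hb | hb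
  · refine both h1 h4' (.inl ⟨?_, ?_⟩) <;> intro y hy z hz <;>
      simp only [mem_Ici, mem_Iic] at hy hz <;> omega
  · refine both h2 h3' (.inr ⟨?_, ?_⟩) <;> intro y hy z hz <;>
      simp only [mem_Ici, mem_Iic] at hy hz <;> omega

/-- There is no probability measure `ρ` on subsets `Γ` of `ℤ²` such that:
(1) `ρ` is invariant under `Γ ↦ Γ + v` for all `v` in the full-rank sublattice `L`;
(2) `ρ` satisfies the FKG inequality; and (3) `ρ`-a.s. `Γ` has exactly one infinite connected
component and `ℤ² ∖ Γ` has exactly one infinite connected component. -/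
theorem no_fkg_invariant_unique_infinite_components_measure
    (L : AddSubgroup (ℤ × ℤ)) (k : ℕ) (hk : 1 ≤ k) (hL : ∀ x : ℤ × ℤ, (k : ℤ) • x ∈ L) :
    ¬ ∃ ρ : Measure Conf, IsProbabilityMeasure ρ ∧
        (∀ v ∈ L, ρ.map (translateConf v) = ρ) ∧
        SatisfiesFKG ρ ∧
        ρ {ω : Conf | (∃! C : Set (ℤ × ℤ), IsComponent (siteSet ω) C ∧ C.Infinite) ∧
            (∃! C : Set (ℤ × ℤ), IsComponent (coSet ω) C ∧ C.Infinite)} = 1 := by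
  rintro ⟨ρ, hp, hinv, hfkg, huniq⟩
  have hinv' : ∀ (i j : ℤ) (A : Set Conf),
      ρ (translateConf (k * i, k * j) ⁻¹' A) ≤ ρ A := by
    intro i j A
    have := Measure.le_map_apply (μ := ρ)
      (measurable_translateConf ((k : ℤ) * i, (k : ℤ) * j)).aemeasurable A
    rwa [hinv _ (by simpa using hL (i, j))] at this
  -- the event in the hypothesis is contained in a measurable one, which is therefore almost sure
  have hmeas : MeasurableSet {ω : Conf | UniqueInf (siteSet ω) ∧ UniqueInf (siteSet (colorFlip ω))} :=
    (measurableSet_setOfPred.2 measurable_uniqueInf).inter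
      (measurable_colorFlip (measurableSet_setOfPred.2 measurable_uniqueInf))
  have hae : ∀ᵐ ω ∂ρ, UniqueInf (siteSet ω) ∧ UniqueInf (siteSet (colorFlip ω)) := by
    refine (prob_compl_eq_zero_iff hmeas).2 (le_antisymm prob_le_one ?_)
    rw [← huniq]
    refine measure_mono fun ω hω => ⟨uniqueInf_of_existsUnique hω.1, ?_⟩
    rw [siteSet_colorFlip]
    exact uniqueInf_of_existsUnique hω.2
  have hP : Perc k ρ := by
    refine ⟨by exact_mod_cast hk, hp, hinv', ?_, hae.mono fun ω h => h.1⟩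
    intro A B hA hB hA' incB
    have h1 := hfkg A B hA hB hA' incB
    -- in terms of real numbers this is inclusion-exclusion
    have r1 : ρ.real A * ρ.real B ≤ ρ.real (A ∩ B) := by
      have := ENNReal.toReal_mono (measure_ne_top ρ _) h1
      rwa [ENNReal.toReal_mul] at this
    have r2 := measureReal_union_add_inter (μ := ρ) (s := A) hB
    have r3 := probReal_compl_eq_one_sub (μ := ρ) hA
    have r4 := probReal_compl_eq_one_sub (μ := ρ) hB
    have r5 := probReal_compl_eq_one_sub (μ := ρ) (hA.union hB)
    have r6 : ρ.real Aᶜ * ρ.real Bᶜ ≤ ρ.real (A ∪ B)ᶜ := by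
      rw [r3, r4, r5]; nlinarith
    rw [← ENNReal.toReal_le_toReal (by finiteness) (by finiteness), ENNReal.toReal_mul]
    exact r6
  refine perc_contradiction hP ⟨by exact_mod_cast hk, ?_, ?_, ?_, ?_⟩
  · exact Measure.isProbabilityMeasure_map measurable_colorFlip.aemeasurable
  · intro i j A
    have h_swap : ∀ B : Set Conf, ρ.map colorFlip B = ρ (colorFlip ⁻¹' B) := by
      let E : Conf ≃ᵐ Conf :=
        { toFun := colorFlip
          invFun := colorFlip
          left_inv := fun ω => by ext x; simp [colorFlip]
          right_inv := fun ω => by ext x; simp [colorFlip]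
          measurable_toFun := measurable_colorFlip
          measurable_invFun := measurable_colorFlip }
      exact fun B => E.map_apply B
    rw [h_swap, h_swap]
    exact hinv' i j (colorFlip ⁻¹' A)
  · intro A B hA hB hA' hB'
    have hdec : ∀ C : Set Conf, IncreasingEvent C → IncreasingEvent (colorFlip ⁻¹' Cᶜ) := by
      intro C hC ω ω' hω hle hω'
      refine hω (hC hω' fun x => ?_)
      have := hle x
      simp only [colorFlip]
      revert this
      cases ω x <;> cases ω' x <;> simp
    rw [Measure.map_apply measurable_colorFlip hA.compl, Measure.map_apply measurable_colorFlip hB.compl,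
      Measure.map_apply measurable_colorFlip (hA.union hB).compl, compl_union, preimage_inter]
    exact hfkg _ _ (measurable_colorFlip hA.compl) (measurable_colorFlip hB.compl) (hdec A hA') (hdec B hB')
  · rw [ae_map_iff measurable_colorFlip.aemeasurable (measurableSet_setOfPred.2 measurable_uniqueInf)]
    exact hae.mono fun ω h => h.2
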